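/- arXiv:2212.12900 — 2 statements merged into one kernel-verified Lean document; each statement's English description precedes it below -/
import Mathlib

section
/- Let $R_1$ be a commutative ring with unity of cardinality $4$, and let $u_1, u_2$ be the two distinct elements of $R_1 \setminus \{0,1\}$. Then $\Gamma'(R_1 \times \mathbb{Z}_2 \times \mathbb{Z}_2)$ contains $K_{3,3}$ as a subgraph, with parts $\{(0,1,1), (u_1,0,1), (u_2,0,1)\}$ and $\{(u_1,1,0), (u_2,1,0), (1,1,0)\}$. -/
/-- Adjacency in the cozero-divisor graph `Γ'(R)`: both elements are vertices
(non-zero non-units) and neither lies in the principal ideal generated by the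
other. -/
def cozeroAdj {R : Type*} [CommRing R] (x y : R) : Prop :=
  (x ≠ 0 ∧ ¬ IsUnit x) ∧ (y ≠ 0 ∧ ¬ IsUnit y) ∧
    x ∉ Ideal.span {y} ∧ y ∉ Ideal.span {x}

/-!
Two elements `x`, `y` are adjacent as soon as one ring homomorphism kills `x` but not `y` and
another kills `y` but not `x`; being non-zero and non-unit then comes for free. Here the
homomorphisms are coordinate projections: the third kills the second part but no vertex of the
first; the second kills `(u₁, 0, 1)` and `(u₂, 0, 1)`, and the first kills `(0, 1, 1)`, while
neither of these two kills a vertex of the second part.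
-/

theorem not_dvd_of_map_eq_zero {M N F : Type*} [Semigroup M] [SemigroupWithZero N] [FunLike F M N]
    [MulHomClass F M N] (f : F) {x y : M} (hx : f x = 0) (hy : f y ≠ 0) : ¬ x ∣ y :=
  fun h => hy (zero_dvd_iff.mp (hx ▸ map_dvd f h))

section

variable {R S T : Type*} [CommRing R] [CommRing S] [CommRing T]

theorem cozeroAdj_iff_not_dvd {x y : R} : cozeroAdj x y ↔ ¬ y ∣ x ∧ ¬ x ∣ y := by
  simp only [cozeroAdj, Ideal.mem_span_singleton]
  constructor
  · rintro ⟨-, -, hyx, hxy⟩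
    exact ⟨hyx, hxy⟩
  · rintro ⟨hyx, hxy⟩
    have hx : x ≠ 0 ∧ ¬ IsUnit x :=
      ⟨fun h => hyx (h ▸ dvd_zero y), fun h => hxy h.dvd⟩
    have hy : y ≠ 0 ∧ ¬ IsUnit y :=
      ⟨fun h => hxy (h ▸ dvd_zero x), fun h => hyx h.dvd⟩
    exact ⟨hx, hy, hyx, hxy⟩

theorem cozeroAdj.ne {x y : R} (h : cozeroAdj x y) : x ≠ y := by
  rintro rfl
  exact (cozeroAdj_iff_not_dvd.mp h).1 dvd_rfl

theorem cozeroAdj_of_map_eq_zero (f : R →+* S) (g : R →+* T) {x y : R}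
    (hfx : f x = 0) (hfy : f y ≠ 0) (hgx : g x ≠ 0) (hgy : g y = 0) : cozeroAdj x y :=
  cozeroAdj_iff_not_dvd.mpr
    ⟨not_dvd_of_map_eq_zero g hgy hgx, not_dvd_of_map_eq_zero f hfx hfy⟩

theorem cozeroAdj_of_fst_eq_zero {b : R} {t : T} (hb : b ≠ 0) (ht : t ≠ 0) (s s' : S) :
    cozeroAdj (0, s, t) (b, s', 0) :=
  cozeroAdj_of_map_eq_zero (RingHom.fst R (S × T))
    ((RingHom.snd S T).comp (RingHom.snd R (S × T))) rfl hb ht rfl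

theorem cozeroAdj_of_snd_fst_eq_zero {s : S} {t : T} (hs : s ≠ 0) (ht : t ≠ 0) (a b : R) :
    cozeroAdj (a, 0, t) (b, s, 0) :=
  cozeroAdj_of_map_eq_zero ((RingHom.fst S T).comp (RingHom.snd R (S × T)))
    ((RingHom.snd S T).comp (RingHom.snd R (S × T))) rfl hs ht rfl

end

theorem injective_vec_three_iff {α : Type*} {a b c : α} :
    Function.Injective ![a, b, c] ↔ a ≠ b ∧ a ≠ c ∧ b ≠ c := by
  simp only [Matrix.vecCons, Fin.cons_injective_iff]
  simp [Function.injective_of_subsingleton, and_assoc, and_left_comm]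

theorem stmt5_general {R S T : Type*} [CommRing R] [CommRing S] [CommRing T]
    [Nontrivial S] [Nontrivial T] {u₁ u₂ : R}
    (hu₁0 : u₁ ≠ 0) (hu₁1 : u₁ ≠ 1) (hu₂0 : u₂ ≠ 0) (hu₂1 : u₂ ≠ 1) (hu : u₁ ≠ u₂)
    {A B : Fin 3 → R × S × T}
    (hA : A = ![(0, 1, 1), (u₁, 0, 1), (u₂, 0, 1)])
    (hB : B = ![(u₁, 1, 0), (u₂, 1, 0), (1, 1, 0)]) :
    Function.Injective A ∧ Function.Injective B ∧ (∀ i j, A i ≠ B j) ∧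
      ∀ i j, cozeroAdj (A i) (B j) := by
  have : Nontrivial R := nontrivial_of_ne u₁ 0 hu₁0
  have hBj (j : Fin 3) : ∃ b : R, b ≠ 0 ∧ B j = (b, 1, 0) := by
    subst hB
    fin_cases j
    exacts [⟨u₁, hu₁0, rfl⟩, ⟨u₂, hu₂0, rfl⟩, ⟨1, one_ne_zero, rfl⟩]
  have hadj (i j : Fin 3) : cozeroAdj (A i) (B j) := by
    obtain ⟨b, hb, hBb⟩ := hBj j
    rw [hBb, hA]
    fin_cases i
    exacts [cozeroAdj_of_fst_eq_zero hb one_ne_zero 1 1,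
      cozeroAdj_of_snd_fst_eq_zero one_ne_zero one_ne_zero u₁ b,
      cozeroAdj_of_snd_fst_eq_zero one_ne_zero one_ne_zero u₂ b]
  refine ⟨?_, ?_, fun i j => (hadj i j).ne, hadj⟩
  · simp [hA, injective_vec_three_iff, hu]
  · simp [hB, injective_vec_three_iff, hu, hu₁1, hu₂1]

/-- Let `R₁` be a commutative ring with unity of cardinality `4` and let
`u₁, u₂` be the two distinct elements of `R₁ \ {0,1}`.  Then
`Γ'(R₁ × ℤ₂ × ℤ₂)` contains `K_{3,3}` as a subgraph with the indicated parts. -/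
theorem stmt5 (R₁ : Type*) [CommRing R₁] (hc : Nat.card R₁ = 4)
    (u₁ u₂ : R₁)
    (hu₁0 : u₁ ≠ 0) (hu₁1 : u₁ ≠ 1) (hu₂0 : u₂ ≠ 0) (hu₂1 : u₂ ≠ 1)
    (hu : u₁ ≠ u₂)
    (A B : Fin 3 → R₁ × ZMod 2 × ZMod 2)
    (hA : A = ![(0, 1, 1), (u₁, 0, 1), (u₂, 0, 1)])
    (hB : B = ![(u₁, 1, 0), (u₂, 1, 0), (1, 1, 0)]) :
    Function.Injective A ∧ Function.Injective B ∧ (∀ i j, A i ≠ B j) ∧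
      ∀ i j, cozeroAdj (A i) (B j) :=
  stmt5_general hu₁0 hu₁1 hu₂0 hu₂1 hu hA hB
end

section
/- Let $F_1, F_2, F_3, F_4$ be fields and let $R = F_1 \times F_2 \times F_3 \times F_4$. In $\Gamma_r(R)$, consider the vertices $x_1 = (0)\times(1)\times(0)\times(1)$, $x_2 = (0)\times(1)\times(0)\times(0)$, $x_3 = (0)\times(1)\times(1)\times(1)$, $x_4 = (0)\times(1)\times(1)\times(0)$, $x_5 = (0)\times(0)\times(1)\times(1)$, $x_6 = (1)\times(0)\times(0)\times(1)$, $x_7 = (1)\times(0)\times(0)\times(0)$, $x_8 = (1)\times(0)\times(1)\times(1)$, $x_9 = (1)\times(0)\times(1)\times(0)$, $x_{10} = (1)\times(1)\times(0)\times(0)$, $x_{11} = (0)\times(0)\times(1)\times(0)$, $x_{12} = (1)\times(1)\times(0)\times(1)$, where $(1)$ denotes the full factor and $(0)$ the zero ideal of that factor. Then $x_i$ is adjacent to $x_j$ for every $i \in \{1,\ldots,5\}$ and $j \in \{6,\ldots,10\}$ except for the pairs $(x_2, x_{10})$ and $(x_5, x_8)$, and moreover $x_2 \sim x_{11}$, $x_{11}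 \sim x_{10}$, $x_5 \sim x_{12}$, and $x_{12} \sim x_8$; in particular, $\Gamma_r(F_1 \times F_2 \times F_3 \times F_4)$ contains a subdivision of $K_{5,5}$ as a subgraph. -/
/-- Adjacency in the reduced cozero-divisor graph `Γ_r(R)`:
the two ideals are nontrivial principal ideals (vertices of the graph),
they are distinct, and neither is properly contained in the other. -/
def redCozeroAdj {R : Type*} [CommRing R] (I J : Ideal R) : Prop :=
  (I.IsPrincipal ∧ I ≠ ⊥ ∧ I ≠ ⊤) ∧ (J.IsPrincipal ∧ J ≠ ⊥ ∧ J ≠ ⊤) ∧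
    I ≠ J ∧ ¬ I < J ∧ ¬ J < I

/-!
In a product of four nontrivial rings, the ideals generated by the `0`-`1` vectors form a copy of
the Boolean lattice of subsets of `{0, 1, 2, 3}`, an ideal corresponding to its set of full factors.
Two principal ideals are adjacent in `Γ_r` exactly when they are incomparable, so every adjacency
between such ideals is decided by comparing two subsets of a four-element set.
-/

theorem redCozeroAdj_iff_incompRel {R : Type*} [CommRing R] {I J : Ideal R}
    (hI : I.IsPrincipal) (hJ : J.IsPrincipal) :
    redCozeroAdj I J ↔ IncompRel (· ≤ ·) I J := by
  constructor
  · rintro ⟨-, -, hne, hIJ, hJI⟩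
    exact ⟨fun h => hIJ (h.lt_of_ne hne), fun h => hJI (h.lt_of_ne hne.symm)⟩
  · rintro ⟨hIJ, hJI⟩
    have hI_bot : I ≠ ⊥ := fun h => hIJ (h.trans_le bot_le)
    have hI_top : I ≠ ⊤ := fun h => hJI (le_top.trans_eq h.symm)
    have hJ_bot : J ≠ ⊥ := fun h => hJI (h.trans_le bot_le)
    have hJ_top : J ≠ ⊤ := fun h => hIJ (le_top.trans_eq h.symm)
    exact ⟨⟨hI, hI_bot, hI_top⟩, ⟨hJ, hJ_bot, hJ_top⟩,
      fun h => hIJ h.le, fun h => hIJ h.le, fun h => hJI h.le⟩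

theorem ite_one_zero_dvd_ite_one_zero_iff {M₀ : Type*} [MonoidWithZero M₀] [Nontrivial M₀]
    {p q : Prop} [Decidable p] [Decidable q] :
    (if p then (1 : M₀) else 0) ∣ (if q then 1 else 0) ↔ (q → p) := by
  by_cases hp : p <;> by_cases hq : q <;> simp [hp, hq]

section CoordIdeal

variable (R₁ R₂ R₃ R₄ : Type*) [CommRing R₁] [CommRing R₂] [CommRing R₃] [CommRing R₄]

/-- The ideal `I₀ × I₁ × I₂ × I₃` of `R₁ × R₂ × R₃ × R₄` in which `Iₖ` is the full factor if `k ∈ s`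
and `(0)` otherwise. The coordinates are numbered from `0`, and the ideal is presented by its
idempotent generator. -/
def coordIdeal (s : Finset (Fin 4)) : Ideal (R₁ × R₂ × R₃ × R₄) :=
  Ideal.span {(if 0 ∈ s then 1 else 0, if 1 ∈ s then 1 else 0,
    if 2 ∈ s then 1 else 0, if 3 ∈ s then 1 else 0)}

theorem coordIdeal_isPrincipal (s : Finset (Fin 4)) :
    (coordIdeal R₁ R₂ R₃ R₄ s).IsPrincipal :=
  ⟨_, rfl⟩

variable [Nontrivial R₁] [Nontrivial R₂] [Nontrivial R₃] [Nontrivial R₄]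

theorem coordIdeal_le_coordIdeal_iff {s t : Finset (Fin 4)} :
    coordIdeal R₁ R₂ R₃ R₄ s ≤ coordIdeal R₁ R₂ R₃ R₄ t ↔ s ≤ t := by
  rw [coordIdeal, coordIdeal, Ideal.span_singleton_le_span_singleton]
  simp [prod_dvd_iff, ite_one_zero_dvd_ite_one_zero_iff, Finset.subset_iff, Fin.forall_fin_succ]

theorem redCozeroAdj_coordIdeal_iff {s t : Finset (Fin 4)} :
    redCozeroAdj (coordIdeal R₁ R₂ R₃ R₄ s) (coordIdeal R₁ R₂ R₃ R₄ t) ↔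
      IncompRel (· ≤ ·) s t := by
  rw [redCozeroAdj_iff_incompRel (coordIdeal_isPrincipal ..) (coordIdeal_isPrincipal ..)]
  simp only [IncompRel, coordIdeal_le_coordIdeal_iff]

end CoordIdeal

theorem stmt19_general (R₁ R₂ R₃ R₄ : Type*) [CommRing R₁] [CommRing R₂] [CommRing R₃]
    [CommRing R₄] [Nontrivial R₁] [Nontrivial R₂] [Nontrivial R₃] [Nontrivial R₄]
    (A B : Fin 5 → Ideal (R₁ × R₂ × R₃ × R₄))
    (C₁ C₂ : Ideal (R₁ × R₂ × R₃ × R₄))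
    (hA : A = ![Ideal.span {((0 : R₁), (1 : R₂), (0 : R₃), (1 : R₄))},
                Ideal.span {((0 : R₁), (1 : R₂), (0 : R₃), (0 : R₄))},
                Ideal.span {((0 : R₁), (1 : R₂), (1 : R₃), (1 : R₄))},
                Ideal.span {((0 : R₁), (1 : R₂), (1 : R₃), (0 : R₄))},
                Ideal.span {((0 : R₁), (0 : R₂), (1 : R₃), (1 : R₄))}])
    (hB : B = ![Ideal.span {((1 : R₁), (0 : R₂), (0 : R₃), (1 : R₄))},
                Ideal.span {((1 : R₁), (0 : R₂), (0 : R₃), (0 : R₄))},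
                Ideal.span {((1 : R₁), (0 : R₂), (1 : R₃), (1 : R₄))},
                Ideal.span {((1 : R₁), (0 : R₂), (1 : R₃), (0 : R₄))},
                Ideal.span {((1 : R₁), (1 : R₂), (0 : R₃), (0 : R₄))}])
    (hC₁ : C₁ = Ideal.span {((0 : R₁), (0 : R₂), (1 : R₃), (0 : R₄))})
    (hC₂ : C₂ = Ideal.span {((1 : R₁), (1 : R₂), (0 : R₃), (1 : R₄))}) :
    (∀ i j : Fin 5, redCozeroAdj (A i) (B j) ↔ ¬ ((i = 1 ∧ j = 4) ∨ (i = 4 ∧ j = 2))) ∧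
    redCozeroAdj (A 1) C₁ ∧ redCozeroAdj C₁ (B 4) ∧
    redCozeroAdj (A 4) C₂ ∧ redCozeroAdj C₂ (B 2) := by
  have hA_coord : ∀ i, A i =
      coordIdeal R₁ R₂ R₃ R₄ (![{1, 3}, {1}, {1, 2, 3}, {1, 2}, {2, 3}] i) := by
    subst hA
    intro i
    fin_cases i <;> rfl
  have hB_coord : ∀ j, B j =
      coordIdeal R₁ R₂ R₃ R₄ (![{0, 3}, {0}, {0, 2, 3}, {0, 2}, {0, 1}] j) := by
    subst hB
    intro j
    fin_cases j <;> rfl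
  have hC₁_coord : C₁ = coordIdeal R₁ R₂ R₃ R₄ {2} := hC₁
  have hC₂_coord : C₂ = coordIdeal R₁ R₂ R₃ R₄ {0, 1, 3} := hC₂
  simp only [hA_coord, hB_coord, hC₁_coord, hC₂_coord, redCozeroAdj_coordIdeal_iff]
  decide

/-- Let `F₁, F₂, F₃, F₄` be fields.  In `Γ_r(F₁ × F₂ × F₃ × F₄)`, with the
vertices `x₁, …, x₁₂` listed below (written as `A = ![x₁, …, x₅]`,
`B = ![x₆, …, x₁₀]`, `C₁ = x₁₁`, `C₂ = x₁₂`), `xᵢ ∼ xⱼ` for all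
`i ∈ {1,…,5}`, `j ∈ {6,…,10}` except for the pairs `(x₂, x₁₀)` and
`(x₅, x₈)`, and moreover `x₂ ∼ x₁₁ ∼ x₁₀` and `x₅ ∼ x₁₂ ∼ x₈`
(so that `Γ_r(F₁ × F₂ × F₃ × F₄)` contains a subdivision of `K_{5,5}`). -/
theorem stmt19 (F₁ F₂ F₃ F₄ : Type*) [Field F₁] [Field F₂] [Field F₃] [Field F₄]
    (A B : Fin 5 → Ideal (F₁ × F₂ × F₃ × F₄))
    (C₁ C₂ : Ideal (F₁ × F₂ × F₃ × F₄))
    (hA : A = ![Ideal.span {((0 : F₁), (1 : F₂), (0 : F₃), (1 : F₄))},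
                Ideal.span {((0 : F₁), (1 : F₂), (0 : F₃), (0 : F₄))},
                Ideal.span {((0 : F₁), (1 : F₂), (1 : F₃), (1 : F₄))},
                Ideal.span {((0 : F₁), (1 : F₂), (1 : F₃), (0 : F₄))},
                Ideal.span {((0 : F₁), (0 : F₂), (1 : F₃), (1 : F₄))}])
    (hB : B = ![Ideal.span {((1 : F₁), (0 : F₂), (0 : F₃), (1 : F₄))},
                Ideal.span {((1 : F₁), (0 : F₂), (0 : F₃), (0 : F₄))},
                Ideal.span {((1 : F₁), (0 : F₂), (1 : F₃), (1 : F₄))},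
                Ideal.span {((1 : F₁), (0 : F₂), (1 : F₃), (0 : F₄))},
                Ideal.span {((1 : F₁), (1 : F₂), (0 : F₃), (0 : F₄))}])
    (hC₁ : C₁ = Ideal.span {((0 : F₁), (0 : F₂), (1 : F₃), (0 : F₄))})
    (hC₂ : C₂ = Ideal.span {((1 : F₁), (1 : F₂), (0 : F₃), (1 : F₄))}) :
    (∀ i j : Fin 5, ¬ ((i = 1 ∧ j = 4) ∨ (i = 4 ∧ j = 2)) →
      redCozeroAdj (A i) (B j)) ∧
    redCozeroAdj (A 1) C₁ ∧ redCozeroAdj C₁ (B 4) ∧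
    redCozeroAdj (A 4) C₂ ∧ redCozeroAdj C₂ (B 2) := by
  obtain ⟨hAB, hC⟩ := stmt19_general F₁ F₂ F₃ F₄ A B C₁ C₂ hA hB hC₁ hC₂
  exact ⟨fun i j => (hAB i j).2, hC⟩
end
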